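/- Let F : ℝ^d → ℝ be differentiable, L-smooth and μ-strongly convex with 0 < μ ≤ L. Then for all a, b, c ∈ ℝ^d it holds that ⟨∇F(a), b − c⟩ ≤ F(b) − F(c) − (μ/4)‖b − c‖₂² + L‖a − c‖₂². -/

import Mathlib

/-!
No integration along segments is needed. Strong convexity from `a` to `b` bounds `F b - F a` below
by `⟪∇F a, b - a⟫ + μ/2 ‖b - a‖²`. Strong convexity from `c` to `a`, combined with Cauchy–Schwarz
and the Lipschitz bound on `∇F`, gives the one-sided descent estimate
`F c - F a ≤ ⟪∇F a, c - a⟫ + (L - μ/2) ‖a - c‖²`. This is weaker than the usual descent lemma,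
whose constant is `L/2`, but subtracting it and using `‖b - c‖² ≤ 2 ‖b - a‖² + 2 ‖a - c‖²`
leaves exactly the error term `L ‖a - c‖²`.
-/

open scoped RealInnerProductSpace

/-- For a differentiable, `L`-smooth and `μ`-strongly convex
function `F : ℝ^d → ℝ` with `0 < μ ≤ L`, for all `a b c` we have
`⟪∇F(a), b − c⟫ ≤ F b − F c − (μ/4)‖b − c‖² + L‖a − c‖²`. -/
theorem statement0 {d : ℕ} (F : EuclideanSpace ℝ (Fin d) → ℝ) (L μ : ℝ)
    (hμ : 0 < μ) (hμL : μ ≤ L)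
    (hdiff : Differentiable ℝ F)
    (hsmooth : ∀ v w : EuclideanSpace ℝ (Fin d),
      ‖gradient F v - gradient F w‖ ≤ L * ‖v - w‖)
    (hconv : ∀ v w : EuclideanSpace ℝ (Fin d),
      F v - F w ≥ ⟪gradient F w, v - w⟫ + μ / 2 * ‖v - w‖ ^ 2) :
    ∀ a b c : EuclideanSpace ℝ (Fin d),
      ⟪gradient F a, b - c⟫ ≤ F b - F c - μ / 4 * ‖b - c‖ ^ 2 + L * ‖a - c‖ ^ 2 := by
  intro a b c
  have hab := hconv b a
  have hca := hconv a c
  have hcs : ⟪gradient F a - gradient F c, a - c⟫ ≤ L * ‖a - c‖ ^ 2 :=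
    calc ⟪gradient F a - gradient F c, a - c⟫
        ≤ ‖gradient F a - gradient F c‖ * ‖a - c‖ := real_inner_le_norm _ _
      _ ≤ L * ‖a - c‖ * ‖a - c‖ := by gcongr; exact hsmooth a c
      _ = L * ‖a - c‖ ^ 2 := by ring
  have hnorm : ‖b - c‖ ^ 2 ≤ 2 * ‖b - a‖ ^ 2 + 2 * ‖a - c‖ ^ 2 := by
    have htri : ‖b - c‖ ≤ ‖b - a‖ + ‖a - c‖ := norm_sub_le_norm_sub_add_norm_sub b a c
    nlinarith [norm_nonneg (b - c), sq_nonneg (‖b - a‖ - ‖a - c‖)]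
  have hscaled := mul_le_mul_of_nonneg_left hnorm (by positivity : 0 ≤ μ / 4)
  have hsplit : ⟪gradient F a, b - c⟫ = ⟪gradient F a, b - a⟫ + ⟪gradient F a, a - c⟫ := by
    rw [← inner_add_right, sub_add_sub_cancel]
  rw [inner_sub_left] at hcs
  linarith
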